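/- Let P be a monic quartic with roots r1, r2, r3, r4, all distinct, and let a(r) = a0 + a1 r + a2 r^2 + a3 r^3. Then the resultant R(a1,a2,a3) = Res_{a0}(B_{14}, N(α)) satisfies R = t_P · ∏_{1≤i<j≤4} (a(r_i) - a(r_j))^2 with t_P = ∏_{1≤i<j≤4} (r_i - r_j)^{-2}. In particular R = ∏_{1≤i<j≤4} ((a(r_i) - a(r_j))/(r_i - r_j))^2. -/

import Mathlib

open Polynomial Matrix

/-- The resultant of a quadratic polynomial `f` and a quartic polynomial `g`, as the
determinant of the 6×6 Sylvester matrix. -/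
noncomputable def sylvResultant24 {R : Type*} [CommRing R] (f g : Polynomial R) : R :=
  Matrix.det !![f.coeff 2, f.coeff 1, f.coeff 0, 0, 0, 0;
                0, f.coeff 2, f.coeff 1, f.coeff 0, 0, 0;
                0, 0, f.coeff 2, f.coeff 1, f.coeff 0, 0;
                0, 0, 0, f.coeff 2, f.coeff 1, f.coeff 0;
                g.coeff 4, g.coeff 3, g.coeff 2, g.coeff 1, g.coeff 0, 0;
                0, g.coeff 4, g.coeff 3, g.coeff 2, g.coeff 1, g.coeff 0]

/-- The cubic polynomial `a(r) = a0 + a1 r + a2 r^2 + a3 r^3`. -/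
def cubicEval {F : Type*} [Field F] (a0 a1 a2 a3 r : F) : F :=
  a0 + a1 * r + a2 * r ^ 2 + a3 * r ^ 3

/-- The determinant `sylvResultant24` is Mathlib's resultant in formal degrees `2` and `4`. -/
theorem sylvResultant24_eq_resultant {R : Type*} [CommRing R] (f g : R[X]) :
    sylvResultant24 f g = f.resultant g 2 4 := by
  rw [sylvResultant24, Polynomial.resultant, ← Matrix.det_transpose,
    ← Matrix.det_submatrix_equiv_self (Fin.revPerm (n := 6)) (Polynomial.sylvester f g 2 4)]
  congr 1
  ext i j
  fin_cases i <;> fin_cases j <;> simp [Polynomial.sylvester, Fin.addCases]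

/-- The resultant of a polynomial of degree at most `2` and a product of four monic linear
polynomials is the product of the values at the four roots. -/
theorem sylvResultant24_prod_X_add_C {F : Type*} [Field F] (f : F[X]) (hf : f.natDegree ≤ 2)
    (b : Fin 4 → F) :
    sylvResultant24 f (∏ i, (X + C (b i))) = ∏ i, f.eval (-b i) := by
  have hdeg : (∏ i, (X + C (b i))).natDegree = 4 := by
    rw [natDegree_prod_of_monic _ _ fun i _ ↦ monic_X_add_C (b i)]
    simp
  have h := resultant_prod_right Finset.univ f (fun i ↦ X + C (b i)) 2 hf (by simp)
  rw [hdeg] at h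
  rw [sylvResultant24_eq_resultant, h]
  refine Finset.prod_congr rfl fun i _ ↦ ?_
  rw [natDegree_X_add_C, resultant_X_add_C_right _ _ _ hf]
  simp

/-- If `V` conjugates `M` to a diagonal matrix, then `det M` is the product of the diagonal. -/
theorem Matrix.det_eq_prod_of_mul_eq_diagonal_mul {n R : Type*} [Fintype n] [DecidableEq n]
    [CommRing R] [IsDomain R] {V M : Matrix n n R} {d : n → R} (hV : V.det ≠ 0)
    (h : V * M = diagonal d * V) : M.det = ∏ i, d i := by
  have := congrArg det h
  rw [det_mul, det_mul, det_diagonal, mul_comm] at this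
  exact mul_right_cancel₀ hV this

/-- If `V` conjugates `M` to a diagonal matrix, then it conjugates the adjugates as well. -/
theorem Matrix.mul_adjugate_eq_of_mul_eq_diagonal_mul {n R : Type*} [Fintype n] [DecidableEq n]
    [CommRing R] [IsDomain R] {V M : Matrix n n R} {d : n → R} (hV : V.det ≠ 0)
    (hd : ∀ i, d i ≠ 0) (h : V * M = diagonal d * V) :
    V * M.adjugate = (diagonal d).adjugate * V := by
  have hM : M.det = (diagonal d).det := by
    rw [det_eq_prod_of_mul_eq_diagonal_mul hV h, det_diagonal]
  have hd' : (diagonal d).det ≠ 0 := by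
    rw [det_diagonal]
    exact Finset.prod_ne_zero_iff.2 fun i _ ↦ hd i
  refine smul_right_injective _ hd' ?_
  calc (diagonal d).det • (V * M.adjugate)
      = (diagonal d).adjugate * (diagonal d * V) * M.adjugate := by
        rw [← Matrix.mul_assoc, adjugate_mul, smul_mul, Matrix.one_mul, smul_mul]
    _ = (diagonal d).det • ((diagonal d).adjugate * V) := by
        rw [← h, Matrix.mul_assoc, Matrix.mul_assoc, mul_adjugate, hM, Matrix.mul_smul,
          Matrix.mul_smul, Matrix.mul_one]

/-- Lagrange interpolation formula for the leading coefficient of a cubic. -/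
theorem cubic_coeff_eq_lagrange {F : Type*} [Field F] {r : Fin 4 → F} (hr : Function.Injective r)
    (q v : Fin 4 → F) (h : ∀ i, ∑ k : Fin 4, r i ^ (k : ℕ) * q k = v i) :
    q 3 = v 0 / ((r 0 - r 1) * (r 0 - r 2) * (r 0 - r 3))
      + v 1 / ((r 1 - r 0) * (r 1 - r 2) * (r 1 - r 3))
      + v 2 / ((r 2 - r 0) * (r 2 - r 1) * (r 2 - r 3))
      + v 3 / ((r 3 - r 0) * (r 3 - r 1) * (r 3 - r 2)) := by
  have hne : ∀ i j, i ≠ j → r i - r j ≠ 0 := fun i j hij ↦ sub_ne_zero.2 (hr.ne hij)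
  have h01 := hne 0 1 (by decide)
  have h02 := hne 0 2 (by decide)
  have h03 := hne 0 3 (by decide)
  have h12 := hne 1 2 (by decide)
  have h13 := hne 1 3 (by decide)
  have h23 := hne 2 3 (by decide)
  simp only [← h, Fin.sum_univ_four, Fin.val_zero, Fin.val_one, Fin.val_two, pow_zero, pow_one,
    show ((3 : Fin 4) : ℕ) = 3 from rfl]
  generalize r 0 = x0, r 1 = x1, r 2 = x2, r 3 = x3 at *
  rw [← neg_sub x0 x1, ← neg_sub x0 x2, ← neg_sub x0 x3, ← neg_sub x1 x2, ← neg_sub x1 x3,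
    ← neg_sub x2 x3]
  field_simp
  ring

/-- A matrix representing multiplication by `α` in the power basis of `R[X]/(P)` has the values of
`α` at the roots of `P` as eigenvalues, with left eigenvectors the rows of the Vandermonde
matrix. -/
theorem vandermonde_mul_eq_diagonal_mul {R : Type*} [CommRing R] {P : R[X]} {n : ℕ}
    {M : Matrix (Fin n) (Fin n) R} (p : R[X])
    (hM : ∀ j : Fin n, AdjoinRoot.mk P p * AdjoinRoot.root P ^ (j : ℕ)
      = ∑ i : Fin n, algebraMap R (AdjoinRoot P) (M i j) * AdjoinRoot.root P ^ (i : ℕ))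
    {x : Fin n → R} (hx : ∀ i, P.eval (x i) = 0) :
    vandermonde x * M = diagonal (fun i ↦ p.eval (x i)) * vandermonde x := by
  ext i j
  have hx' : P.eval₂ (RingHom.id R) (x i) = 0 := by simpa [eval₂_id] using hx i
  have h := congrArg (AdjoinRoot.lift (RingHom.id R) (x i) hx') (hM j)
  simp only [map_mul, map_pow, map_sum, AdjoinRoot.lift_mk, AdjoinRoot.lift_root,
    AdjoinRoot.algebraMap_eq, AdjoinRoot.lift_of, RingHom.id_apply, eval₂_id] at h
  rw [diagonal_mul, mul_apply]
  simp only [vandermonde_apply]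
  rw [h]
  exact Finset.sum_congr rfl fun k _ ↦ mul_comm _ _

/-- If `M` is conjugated by the Vandermonde matrix of `r` to the diagonal matrix with entries
`X + b i`, then the resultant of its `(1, 4)` cofactor and its determinant is the product of the
squares of the divided differences of `b`. -/
theorem sylvResultant24_adjugate_det {F : Type*} [Field F] {r b : Fin 4 → F}
    (hr : Function.Injective r) {M : Matrix (Fin 4) (Fin 4) F[X]}
    (hM : vandermonde (fun i ↦ C (r i)) * M
      = diagonal (fun i ↦ X + C (b i)) * vandermonde (fun i ↦ C (r i))) :
    sylvResultant24 (M.adjugate 3 0) M.det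
      = ((b 0 - b 1) / (r 0 - r 1)) ^ 2 * ((b 0 - b 2) / (r 0 - r 2)) ^ 2
        * ((b 0 - b 3) / (r 0 - r 3)) ^ 2 * ((b 1 - b 2) / (r 1 - r 2)) ^ 2
        * ((b 1 - b 3) / (r 1 - r 3)) ^ 2 * ((b 2 - b 3) / (r 2 - r 3)) ^ 2 := by
  have hV : (vandermonde fun i ↦ C (r i)).det ≠ 0 :=
    det_vandermonde_ne_zero_iff.2 (C_injective.comp hr)
  have hadj (i : Fin 4) : ∑ k : Fin 4, C (r i) ^ (k : ℕ) * M.adjugate k 0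
      = ∏ j ∈ Finset.univ.erase i, (X + C (b j)) := by
    have := congrFun₂ (mul_adjugate_eq_of_mul_eq_diagonal_mul hV
      (fun i ↦ X_add_C_ne_zero (b i)) hM) i 0
    rw [adjugate_diagonal, diagonal_mul, mul_apply] at this
    simpa only [vandermonde_apply, Fin.val_zero, pow_zero, mul_one] using this
  have hdeg : (M.adjugate 3 0).natDegree ≤ 2 := by
    refine natDegree_le_iff_coeff_eq_zero.2 fun n hn ↦ ?_
    have hcoeff (i : Fin 4) : (∏ j ∈ Finset.univ.erase i, (X + C (b j))).coeff n
        = if n = 3 then 1 else 0 := by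
      have hmonic := monic_prod_of_monic (Finset.univ.erase i) _ fun j _ ↦ monic_X_add_C (b j)
      have hnat : (∏ j ∈ Finset.univ.erase i, (X + C (b j))).natDegree = 3 := by
        rw [natDegree_prod_of_monic _ _ fun j _ ↦ monic_X_add_C (b j)]
        simp
      split_ifs with h
      · rw [h, ← hnat]
        exact hmonic
      · exact coeff_eq_zero_of_natDegree_lt (by omega)
    have h1 := cubic_coeff_eq_lagrange hr (fun k ↦ (M.adjugate k 0).coeff n)
      (fun _ ↦ if n = 3 then 1 else 0) fun i ↦ by
        rw [← hcoeff i, ← hadj i, finsetSum_coeff]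
        simp only [← C_pow, coeff_C_mul]
    have h2 := cubic_coeff_eq_lagrange hr ![if n = 3 then 1 else 0, 0, 0, 0]
      (fun _ ↦ if n = 3 then 1 else 0) fun i ↦ by simp [Fin.sum_univ_four]
    exact h1.trans h2.symm
  have heval (x : F) := cubic_coeff_eq_lagrange hr (fun k ↦ (M.adjugate k 0).eval x)
    (fun i ↦ ∏ j ∈ Finset.univ.erase i, (x + b j)) fun i ↦ by
      simpa [eval_finsetSum, eval_prod] using congrArg (eval x) (hadj i)
  rw [det_eq_prod_of_mul_eq_diagonal_mul hV hM, sylvResultant24_prod_X_add_C _ hdeg]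
  simp only [Fin.prod_univ_four, heval,
    show Finset.univ.erase (0 : Fin 4) = {1, 2, 3} by decide,
    show Finset.univ.erase (1 : Fin 4) = {0, 2, 3} by decide,
    show Finset.univ.erase (2 : Fin 4) = {0, 1, 3} by decide,
    show Finset.univ.erase (3 : Fin 4) = {0, 1, 2} by decide]
  simp
  have hne : ∀ i j, i ≠ j → r i - r j ≠ 0 := fun i j hij ↦ sub_ne_zero.2 (hr.ne hij)
  have h01 := hne 0 1 (by decide)
  have h02 := hne 0 2 (by decide)
  have h03 := hne 0 3 (by decide)
  have h12 := hne 1 2 (by decide)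
  have h13 := hne 1 3 (by decide)
  have h23 := hne 2 3 (by decide)
  rw [← neg_sub (r 0) (r 1), ← neg_sub (r 0) (r 2), ← neg_sub (r 0) (r 3),
    ← neg_sub (r 1) (r 2), ← neg_sub (r 1) (r 3), ← neg_sub (r 2) (r 3)]
  field_simp
  ring

/-- Let `P` be a monic quartic over a field `F` with distinct roots
`r1, r2, r3, r4`, let `a(r) = a0 + a1 r + a2 r^2 + a3 r^3`, and let `M` be the matrix of
multiplication by `α = a0 + a1 r + a2 r^2 + a3 r^3` in the power basis of a root of `P`,
with `a0` an indeterminate. Then `R = Res_{a0}(B14, N(α))` satisfies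
`R = tP ⬝ ∏_{i<j} (a(r_i) - a(r_j))^2` with `tP = ∏_{i<j} (r_i - r_j)⁻²`; in particular
`R = ∏_{i<j} ((a(r_i) - a(r_j))/(r_i - r_j))^2`. -/
theorem resultant_B14_norm_factorization (F : Type*) [Field F]
    (c0 c1 c2 c3 a0 a1 a2 a3 : F) (r1 r2 r3 r4 : F)
    (hdist : r1 ≠ r2 ∧ r1 ≠ r3 ∧ r1 ≠ r4 ∧ r2 ≠ r3 ∧ r2 ≠ r4 ∧ r3 ≠ r4)
    (hfact : (X ^ 4 + C c3 * X ^ 3 + C c2 * X ^ 2 + C c1 * X + C c0 : F[X])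
        = (X - C r1) * (X - C r2) * (X - C r3) * (X - C r4))
    (Pq : (Polynomial F)[X])
    (hPq : Pq = X ^ 4 + C (C c3) * X ^ 3 + C (C c2) * X ^ 2 + C (C c1) * X + C (C c0))
    (M : Matrix (Fin 4) (Fin 4) (Polynomial F))
    (hM : ∀ j : Fin 4,
      (algebraMap (Polynomial F) (AdjoinRoot Pq) Polynomial.X
          + algebraMap (Polynomial F) (AdjoinRoot Pq) (C a1) * AdjoinRoot.root Pq
          + algebraMap (Polynomial F) (AdjoinRoot Pq) (C a2) * AdjoinRoot.root Pq ^ 2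
          + algebraMap (Polynomial F) (AdjoinRoot Pq) (C a3) * AdjoinRoot.root Pq ^ 3)
        * AdjoinRoot.root Pq ^ (j : ℕ)
      = ∑ i : Fin 4,
          algebraMap (Polynomial F) (AdjoinRoot Pq) (M i j) * AdjoinRoot.root Pq ^ (i : ℕ)) :
    sylvResultant24 (M.adjugate 3 0) M.det
      = ((r1 - r2) ^ 2 * (r1 - r3) ^ 2 * (r1 - r4) ^ 2 * (r2 - r3) ^ 2 * (r2 - r4) ^ 2
            * (r3 - r4) ^ 2)⁻¹
        * ((cubicEval a0 a1 a2 a3 r1 - cubicEval a0 a1 a2 a3 r2) ^ 2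
            * (cubicEval a0 a1 a2 a3 r1 - cubicEval a0 a1 a2 a3 r3) ^ 2
            * (cubicEval a0 a1 a2 a3 r1 - cubicEval a0 a1 a2 a3 r4) ^ 2
            * (cubicEval a0 a1 a2 a3 r2 - cubicEval a0 a1 a2 a3 r3) ^ 2
            * (cubicEval a0 a1 a2 a3 r2 - cubicEval a0 a1 a2 a3 r4) ^ 2
            * (cubicEval a0 a1 a2 a3 r3 - cubicEval a0 a1 a2 a3 r4) ^ 2) ∧
    sylvResultant24 (M.adjugate 3 0) M.det
      = ((cubicEval a0 a1 a2 a3 r1 - cubicEval a0 a1 a2 a3 r2) / (r1 - r2)) ^ 2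
        * ((cubicEval a0 a1 a2 a3 r1 - cubicEval a0 a1 a2 a3 r3) / (r1 - r3)) ^ 2
        * ((cubicEval a0 a1 a2 a3 r1 - cubicEval a0 a1 a2 a3 r4) / (r1 - r4)) ^ 2
        * ((cubicEval a0 a1 a2 a3 r2 - cubicEval a0 a1 a2 a3 r3) / (r2 - r3)) ^ 2
        * ((cubicEval a0 a1 a2 a3 r2 - cubicEval a0 a1 a2 a3 r4) / (r2 - r4)) ^ 2
        * ((cubicEval a0 a1 a2 a3 r3 - cubicEval a0 a1 a2 a3 r4) / (r3 - r4)) ^ 2 := by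
  obtain ⟨h12, h13, h14, h23, h24, h34⟩ := hdist
  set r : Fin 4 → F := ![r1, r2, r3, r4] with hr
  have hinj : Function.Injective r := by
    clear hM hPq hfact
    intro i j hij
    fin_cases i <;> fin_cases j <;> simp_all [eq_comm]
  set b : Fin 4 → F := fun i ↦ a1 * r i + a2 * r i ^ 2 + a3 * r i ^ 3 with hb
  have hroot : ∀ i, Pq.eval (C (r i)) = 0 := by
    intro i
    have hPi : r i ^ 4 + c3 * r i ^ 3 + c2 * r i ^ 2 + c1 * r i + c0 = 0 := by
      have := congrArg (eval (r i)) hfact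
      simp only [eval_add, eval_mul, eval_pow, eval_X, eval_C, eval_sub] at this
      rw [this]
      fin_cases i <;> simp [hr]
    simpa [hPq] using congrArg C hPi
  have hVM := vandermonde_mul_eq_diagonal_mul (M := M)
    (C X + C (C a1) * X + C (C a2) * X ^ 2 + C (C a3) * X ^ 3)
    (by simpa [AdjoinRoot.algebraMap_eq] using hM) hroot
  have hdiag : (fun i ↦ eval (C (r i))
      (C X + C (C a1) * X + C (C a2) * X ^ 2 + C (C a3) * X ^ 3 : F[X][X]))
      = fun i ↦ X + C (b i) := by
    ext1 i
    simp [hb]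
    ring
  rw [hdiag] at hVM
  have hres := sylvResultant24_adjugate_det hinj hVM
  have hsub (i j : Fin 4) :
      cubicEval a0 a1 a2 a3 (r i) - cubicEval a0 a1 a2 a3 (r j) = b i - b j := by
    simp only [cubicEval, hb]
    ring
  have hfinal : sylvResultant24 (M.adjugate 3 0) M.det
      = ((cubicEval a0 a1 a2 a3 r1 - cubicEval a0 a1 a2 a3 r2) / (r1 - r2)) ^ 2
        * ((cubicEval a0 a1 a2 a3 r1 - cubicEval a0 a1 a2 a3 r3) / (r1 - r3)) ^ 2
        * ((cubicEval a0 a1 a2 a3 r1 - cubicEval a0 a1 a2 a3 r4) / (r1 - r4)) ^ 2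
        * ((cubicEval a0 a1 a2 a3 r2 - cubicEval a0 a1 a2 a3 r3) / (r2 - r3)) ^ 2
        * ((cubicEval a0 a1 a2 a3 r2 - cubicEval a0 a1 a2 a3 r4) / (r2 - r4)) ^ 2
        * ((cubicEval a0 a1 a2 a3 r3 - cubicEval a0 a1 a2 a3 r4) / (r3 - r4)) ^ 2 := by
    simp only [← hsub] at hres
    exact hres
  refine ⟨?_, hfinal⟩
  rw [hfinal]
  simp only [div_eq_mul_inv, mul_pow, mul_inv, inv_pow]
  ring
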